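/- Let κ, θ, σ > 0, set ν := 2κθ/σ², let G(x) := ∫ₓ^∞ π_{ν,θ}(y)/y dy, and define Φ(ε) := κ·∫₀^ε π_{ν,θ}(x) dx + (σ²/2)·π_{ν,θ}(ε)²/G(ε) + (σ²/2)·π_{ν,θ}(ε)·(ν − 1 − νε/θ) for ε > 0. If ν ≥ 1, then Φ(ε) tends to 0 as ε tends to 0 from the right. (This is the statement that for ν ≥ 1 the capacity of the origin vanishes, i.e. the origin is polar for the univariate CIR process.) -/

import Mathlib

open Real MeasureTheory Set Filter

/-- Gamma density with shape `ν` and rate `ν/θ`. -/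
noncomputable def piDens (ν θ x : ℝ) : ℝ :=
  ((ν / θ) ^ ν / Real.Gamma ν) * x ^ (ν - 1) * Real.exp (-ν * x / θ)

/-- The function `G(x) = ∫ₓ^∞ π_{ν,θ}(y)/y dy`. -/
noncomputable def Gfun (ν θ x : ℝ) : ℝ :=
  ∫ y in Set.Ioi x, piDens ν θ y / y

lemma piDens_cont (ν θ : ℝ) (h : 1 ≤ ν) : Continuous (piDens ν θ) := by
  unfold piDens
  have : Continuous (fun x : ℝ => x ^ (ν - 1)) := Real.continuous_rpow_const (by linarith)
  fun_prop

lemma piDens_pos (ν θ x : ℝ) (h : 1 ≤ ν) (hθ : 0 < θ) (hx : 0 < x) : 0 < piDens ν θ x := by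
  unfold piDens
  have h0 : 0 < ν := by linarith
  have := Real.Gamma_pos_of_pos h0
  positivity

lemma piDens_int (ν θ : ℝ) (h : 1 ≤ ν) (hθ : 0 < θ) : IntegrableOn (piDens ν θ) (Ioi 0) := by
  have h0 : 0 < ν := by linarith
  have := integrableOn_rpow_mul_exp_neg_mul_rpow (s := ν - 1) (p := 1) (b := ν / θ)
    (by linarith) one_pos (by positivity)
  refine (this.const_mul ((ν / θ) ^ ν / Real.Gamma ν)).congr ?_
  filter_upwards with x
  simp only [piDens, Real.rpow_one, mul_assoc]
  congr 3
  ring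

lemma G_int (ν θ ε : ℝ) (h : 1 ≤ ν) (hθ : 0 < θ) (hε : 0 < ε) :
    IntegrableOn (fun y => piDens ν θ y / y) (Ioi ε) := by
  have h1 : IntegrableOn (piDens ν θ) (Ioi ε) :=
    (piDens_int ν θ h hθ).mono_set (Ioi_subset_Ioi hε.le)
  refine Integrable.mono' (h1.const_mul (1 / ε)) ?_ ?_
  · exact ((piDens_cont ν θ h).measurable.div measurable_id).aestronglyMeasurable
  · refine (ae_restrict_iff' measurableSet_Ioi).2 (Eventually.of_forall fun y hy => ?_)
    have hy' : ε < y := hy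
    have hp := piDens_pos ν θ y h hθ (hε.trans hy')
    rw [Real.norm_of_nonneg (by have := hε.trans hy'; positivity), one_div, inv_mul_eq_div]
    gcongr

lemma G_ge (ν θ ε a b : ℝ) (h : 1 ≤ ν) (hθ : 0 < θ) (hε : 0 < ε) (hεa : ε ≤ a) (hab : a ≤ b) :
    ∫ y in a..b, piDens ν θ y / y ≤ Gfun ν θ ε := by
  rw [intervalIntegral.integral_of_le hab]
  refine setIntegral_mono_set (G_int ν θ ε h hθ hε) ?_ ?_
  · refine (ae_restrict_iff' measurableSet_Ioi).2 (Eventually.of_forall fun y hy => ?_)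
    have hy' : ε < y := hy
    have hp := piDens_pos ν θ y h hθ (hε.trans hy')
    have := hε.trans hy'
    simp only [Pi.zero_apply]
    positivity
  · exact Eventually.of_forall fun y hy => lt_of_le_of_lt hεa hy.1

lemma quot_int (ν θ a b : ℝ) (h : 1 ≤ ν) (ha : 0 < a) (hab : a ≤ b) :
    IntervalIntegrable (fun y => piDens ν θ y / y) volume a b := by
  apply ContinuousOn.intervalIntegrable
  refine (piDens_cont ν θ h).continuousOn.div continuousOn_id fun y hy => ?_
  rw [uIcc_of_le hab] at hy
  exact (ha.trans_le hy.1).ne'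

lemma mid_tendsto (ν θ : ℝ) (h : 1 ≤ ν) (hθ : 0 < θ) :
    Tendsto (fun ε => (piDens ν θ ε) ^ 2 / Gfun ν θ ε) (nhdsWithin 0 (Ioi 0)) (nhds 0) := by
  have hc : Tendsto (fun ε => (piDens ν θ ε) ^ 2) (nhdsWithin 0 (Ioi 0))
      (nhds ((piDens ν θ 0) ^ 2)) :=
    (((piDens_cont ν θ h).pow 2).tendsto 0).mono_left nhdsWithin_le_nhds
  rcases h.eq_or_lt with h1 | h1
  · subst h1
    refine hc.div_atTop ?_
    set c := piDens 1 θ 1 with hcdef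
    have hcpos : 0 < c := piDens_pos 1 θ 1 le_rfl hθ one_pos
    have hl : Tendsto (fun ε => c * -Real.log ε) (nhdsWithin 0 (Ioi 0)) atTop :=
      (tendsto_neg_atBot_atTop.comp Real.tendsto_log_nhdsGT_zero).const_mul_atTop hcpos
    refine tendsto_atTop_mono' _ ?_ hl
    filter_upwards [Ioo_mem_nhdsGT (zero_lt_one' ℝ)] with ε hε
    refine le_trans ?_ (G_ge 1 θ ε ε 1 le_rfl hθ hε.1 le_rfl hε.2.le)
    have e : c * -Real.log ε = ∫ y in ε..1, c * y⁻¹ := by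
      rw [intervalIntegral.integral_const_mul, integral_inv_of_pos hε.1 one_pos]
      simp
    rw [e]
    have hne : ∀ y ∈ uIcc ε 1, y ≠ 0 := fun y hy => by
      rw [uIcc_of_le hε.2.le] at hy
      exact (hε.1.trans_le hy.1).ne'
    refine intervalIntegral.integral_mono_on hε.2.le ?_
      (quot_int 1 θ ε 1 le_rfl hε.1 hε.2.le) fun y hy => ?_
    · exact (continuousOn_const.mul (continuousOn_id.inv₀ hne)).intervalIntegrable
    · have hy0 : 0 < y := hε.1.trans_le hy.1
      rw [div_eq_mul_inv]
      refine mul_le_mul_of_nonneg_right ?_ (by positivity)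
      simp only [hcdef, piDens, sub_self, Real.rpow_zero, Real.rpow_one, Real.Gamma_one]
      have : -1 * 1 / θ ≤ -1 * y / θ := by
        have := hy.2
        gcongr ?_ / θ
        linarith
      gcongr
  · have hz : piDens ν θ 0 = 0 := by
      simp [piDens, Real.zero_rpow (sub_pos.2 h1).ne']
    rw [hz] at hc
    set m := ∫ y in (1:ℝ)..2, piDens ν θ y / y with hm
    have hmpos : 0 < m := by
      refine intervalIntegral.intervalIntegral_pos_of_pos_on
        (quot_int ν θ 1 2 h one_pos one_le_two) (fun y hy => ?_) one_lt_two
      have : 0 < y := one_pos.trans hy.1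
      exact div_pos (piDens_pos ν θ y h hθ this) this
    have hd := hc.div_const m
    simp only [ne_eq, OfNat.ofNat_ne_zero, not_false_eq_true, zero_pow, zero_div] at hd
    refine squeeze_zero' ?_ ?_ hd
    all_goals
      filter_upwards [Ioo_mem_nhdsGT (zero_lt_one' ℝ)] with ε hε
      have hG : m ≤ Gfun ν θ ε := G_ge ν θ ε 1 2 h hθ hε.1 hε.2.le one_le_two
      have := hmpos.trans_le hG
    · positivity
    · gcongr

theorem cir_capacity_origin_vanishes
    (κ θ σ ν : ℝ) (hκ : 0 < κ) (hθ : 0 < θ) (hσ : 0 < σ)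
    (hν : ν = 2 * κ * θ / σ ^ 2) (hν1 : 1 ≤ ν)
    (Φ : ℝ → ℝ)
    (hΦ : ∀ ε > (0:ℝ),
      Φ ε = κ * (∫ x in (0:ℝ)..ε, piDens ν θ x)
        + σ ^ 2 / 2 * (piDens ν θ ε) ^ 2 / Gfun ν θ ε
        + σ ^ 2 / 2 * piDens ν θ ε * (ν - 1 - ν * ε / θ)) :
    Filter.Tendsto Φ (nhdsWithin 0 (Set.Ioi 0)) (nhds 0) := by
  have hc := piDens_cont ν θ hν1
  have t1 : Tendsto (fun ε => κ * (∫ x in (0:ℝ)..ε, piDens ν θ x)) (nhdsWithin 0 (Ioi 0))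
      (nhds 0) := by
    have : Continuous (fun ε => κ * (∫ x in (0:ℝ)..ε, piDens ν θ x)) :=
      continuous_const.mul (intervalIntegral.continuous_primitive
        (fun a b => hc.intervalIntegrable a b) 0)
    have h2 := (this.tendsto 0).mono_left (nhdsWithin_le_nhds (s := Ioi 0))
    simpa using h2
  have t2 := (mid_tendsto ν θ hν1 hθ).const_mul (σ ^ 2 / 2)
  have t3 : Tendsto (fun ε => σ ^ 2 / 2 * piDens ν θ ε * (ν - 1 - ν * ε / θ))
      (nhdsWithin 0 (Ioi 0)) (nhds 0) := by
    have : Continuous (fun ε => σ ^ 2 / 2 * piDens ν θ ε * (ν - 1 - ν * ε / θ)) := by fun_prop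
    have h2 := (this.tendsto 0).mono_left (nhdsWithin_le_nhds (s := Ioi 0))
    have hz : σ ^ 2 / 2 * piDens ν θ 0 * (ν - 1 - ν * 0 / θ) = 0 := by
      rcases hν1.eq_or_lt with h1 | h1
      · simp [← h1]
      · simp [piDens, Real.zero_rpow (sub_pos.2 h1).ne']
    rwa [hz] at h2
  have t := (t1.add t2).add t3
  simp only [mul_zero, add_zero] at t
  refine t.congr' ?_
  filter_upwards [self_mem_nhdsWithin] with ε hε
  rw [hΦ ε hε, mul_div_assoc (σ ^ 2 / 2)]
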